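/- Let P and P' be probability measures on [0,1] with dP = g dP' for a nondecreasing function g (so P MLR-dominates P'). Let μ be a random variable with law P and, conditionally on μ, let B_1, …, B_N be independent Bernoulli(μ) variables; set M = E[μ | B_1, …, B_N]. Analogously, let μ' have law P' with conditionally independent Bernoulli(μ') observations B'_1, …, B'_N, and set M' = E[μ' | B'_1, …, B'_N]. Then the law of M stochastically dominates the law of M': for every t ∈ ℝ, Pr[M ≥ t] ≥ Pr[M' ≥ t]. -/

import Mathlib

open MeasureTheory
open scoped ENNReal

/-- `B 0, …, B (N−1)` are, conditionally on `μ`, independent Bernoulli(`μ`) samples: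
for every measurable `A ⊆ ℝ` and every outcome vector `b`, the joint probability is
given by integrating the Bernoulli likelihood against the law of `μ`. -/
def IsBernoulliSample {Ω : Type*} [MeasurableSpace Ω] (P : Measure Ω)
    (μ : Ω → ℝ) {N : ℕ} (B : Fin N → Ω → Bool) : Prop :=
  ∀ (A : Set ℝ), MeasurableSet A → ∀ b : Fin N → Bool,
    P (μ ⁻¹' A ∩ {ω | ∀ i, B i ω = b i}) =
      ∫⁻ x in A, ∏ i, ENNReal.ofReal (if b i then x else 1 - x) ∂(Measure.map μ P)

/-- Bernoulli likelihood of an outcome vector. -/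
noncomputable def lik {N : ℕ} (b : Fin N → Bool) (x : ℝ) : ℝ := ∏ i, (if b i then x else 1 - x)

/-- Number of successes. -/
def cnt {N : ℕ} (b : Fin N → Bool) : ℕ := (Finset.univ.filter (fun i => b i = true)).card

lemma lik_eq {N : ℕ} (b : Fin N → Bool) (x : ℝ) :
    lik b x = x ^ cnt b * (1 - x) ^ (N - cnt b) := by
  unfold lik cnt
  rw [Finset.prod_ite]
  simp only [Finset.prod_const]
  congr 2
  have := Finset.card_filter_add_card_filter_not (s := (Finset.univ : Finset (Fin N)))
    (fun i => b i = true)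
  simp only [Finset.card_univ, Fintype.card_fin] at this
  omega

lemma cnt_le {N : ℕ} (b : Fin N → Bool) : cnt b ≤ N := by
  unfold cnt
  exact (Finset.card_le_univ _).trans (by simp)

lemma measurable_lik {N : ℕ} (b : Fin N → Bool) : Measurable (lik b) := by
  have : lik b = fun x => x ^ cnt b * (1 - x) ^ (N - cnt b) := funext (lik_eq b)
  rw [this]; fun_prop

lemma lik_nonneg {N : ℕ} (b : Fin N → Bool) {x : ℝ} (hx : x ∈ Set.Icc (0 : ℝ) 1) :
    0 ≤ lik b x := by
  rw [lik_eq]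
  have := hx.1
  have : 0 ≤ 1 - x := by linarith [hx.2]
  positivity

lemma lik_le_one {N : ℕ} (b : Fin N → Bool) {x : ℝ} (hx : x ∈ Set.Icc (0 : ℝ) 1) :
    lik b x ≤ 1 := by
  rw [lik_eq]
  have h1 : 0 ≤ 1 - x := by linarith [hx.2]
  exact mul_le_one₀ (pow_le_one₀ hx.1 hx.2) (by positivity)
    (pow_le_one₀ h1 (by linarith [hx.1]))

lemma lik_mlr {N : ℕ} (b c : Fin N → Bool) (h : cnt c ≤ cnt b) {x y : ℝ}
    (hx : x ∈ Set.Icc (0 : ℝ) 1) (hy : y ∈ Set.Icc (0 : ℝ) 1) (hyx : y ≤ x) :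
    lik b y * lik c x ≤ lik b x * lik c y := by
  rw [lik_eq, lik_eq, lik_eq, lik_eq]
  have hb := cnt_le b
  obtain ⟨d, hd⟩ := Nat.exists_eq_add_of_le h
  obtain ⟨e, he⟩ := Nat.exists_eq_add_of_le hb
  have e1 : N - cnt b = e := by omega
  have e2 : N - cnt c = e + d := by omega
  rw [e1, e2, hd]
  have hx0 := hx.1
  have hy0 := hy.1
  have hx1 : 0 ≤ 1 - x := by linarith [hx.2]
  have hy1 : 0 ≤ 1 - y := by linarith [hy.2]
  have key : (y * (1 - x)) ^ d ≤ (x * (1 - y)) ^ d :=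
    pow_le_pow_left₀ (by positivity) (by nlinarith) d
  have := mul_le_mul_of_nonneg_left key
    (show 0 ≤ x ^ cnt c * y ^ cnt c * (1 - x) ^ e * (1 - y) ^ e by positivity)
  rw [mul_pow, mul_pow] at this
  calc _ = _ := by ring
    _ ≤ _ := this
    _ = _ := by ring

lemma sum_lik {N : ℕ} (x : ℝ) : ∑ b : Fin N → Bool, lik b x = 1 := by
  unfold lik
  rw [← Fintype.prod_sum (fun (_ : Fin N) (c : Bool) => if c then x else 1 - x)]
  simp

lemma upper_mono {N : ℕ} (k : ℕ) {x y : ℝ}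
    (hx : x ∈ Set.Icc (0 : ℝ) 1) (hy : y ∈ Set.Icc (0 : ℝ) 1) (hyx : y ≤ x) :
    ∑ b : Fin N → Bool with k ≤ cnt b, lik b y ≤ ∑ b : Fin N → Bool with k ≤ cnt b, lik b x := by
  have hs : ∀ z, ∑ b : Fin N → Bool with k ≤ cnt b, lik b z
      + ∑ b : Fin N → Bool with ¬ k ≤ cnt b, lik b z = 1 := fun z => by
    rw [Finset.sum_filter_add_sum_filter_not, sum_lik]
  have h : (∑ b : Fin N → Bool with k ≤ cnt b, lik b y) *
        (∑ b : Fin N → Bool with ¬ k ≤ cnt b, lik b x)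
      ≤ (∑ b : Fin N → Bool with k ≤ cnt b, lik b x) *
        (∑ b : Fin N → Bool with ¬ k ≤ cnt b, lik b y) := by
    rw [Finset.sum_mul_sum, Finset.sum_mul_sum]
    refine Finset.sum_le_sum fun b hb => Finset.sum_le_sum fun c hc => ?_
    simp only [Finset.mem_filter, Finset.mem_univ, true_and] at hb hc
    exact lik_mlr b c (by omega) hx hy hyx
  rw [eq_sub_of_add_eq' (hs x), eq_sub_of_add_eq' (hs y)] at h
  linarith

lemma int4 (m : Measure ℝ) {a b c d : ℝ → ℝ} (ha : Integrable a m) (hb : Integrable b m)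
    (hc : Integrable c m) (hd : Integrable d m) :
    ∫ x, (a x - b x - c x + d x) ∂m =
      ∫ x, a x ∂m - ∫ x, b x ∂m - ∫ x, c x ∂m + ∫ x, d x ∂m := by
  have h1 : Integrable (fun x => a x - b x) m := ha.sub hb
  have h2 : Integrable (fun x => a x - b x - c x) m := h1.sub hc
  rw [integral_add h2 hd, integral_sub h1 hc, integral_sub ha hb]

/-- Chebyshev-type correlation inequality. -/
lemma cheb (m : Measure ℝ) [IsProbabilityMeasure m] (w f₁ f₂ : ℝ → ℝ) (S : Set ℝ)
    (hS : ∀ᵐ x ∂m, x ∈ S)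
    (h : ∀ x ∈ S, ∀ y ∈ S, y ≤ x → 0 ≤ (w x - w y) * (f₁ x * f₂ y - f₁ y * f₂ x))
    (i1 : Integrable f₁ m) (i2 : Integrable f₂ m)
    (i3 : Integrable (fun x => w x * f₁ x) m) (i4 : Integrable (fun x => w x * f₂ x) m) :
    (∫ x, f₁ x ∂m) * (∫ x, w x * f₂ x ∂m) ≤ (∫ x, w x * f₁ x ∂m) * (∫ x, f₂ x ∂m) := by
  have h' : ∀ x ∈ S, ∀ y ∈ S, 0 ≤ (w x - w y) * (f₁ x * f₂ y - f₁ y * f₂ x) := by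
    intro x hx y hy
    rcases le_total y x with hyx | hyx
    · exact h x hx y hy hyx
    · have := h y hy x hx hyx
      linarith
  have hin : ∀ x ∈ S, 0 ≤ w x * f₁ x * (∫ y, f₂ y ∂m) - w x * f₂ x * (∫ y, f₁ y ∂m)
      - f₁ x * (∫ y, w y * f₂ y ∂m) + f₂ x * (∫ y, w y * f₁ y ∂m) := by
    intro x hx
    rw [← integral_const_mul, ← integral_const_mul, ← integral_const_mul, ← integral_const_mul,
      ← int4 m (i2.const_mul _) (i1.const_mul _) (i4.const_mul _) (i3.const_mul _)]
    refine integral_nonneg_of_ae ?_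
    filter_upwards [hS] with y hy
    have := h' x hx y hy
    simp only [Pi.zero_apply]
    linarith
  have hout : 0 ≤ ∫ x, (w x * f₁ x * (∫ y, f₂ y ∂m) - w x * f₂ x * (∫ y, f₁ y ∂m)
      - f₁ x * (∫ y, w y * f₂ y ∂m) + f₂ x * (∫ y, w y * f₁ y ∂m)) ∂m := by
    refine integral_nonneg_of_ae ?_
    filter_upwards [hS] with x hx
    exact hin x hx
  rw [int4 m (i3.mul_const _) (i4.mul_const _) (i1.mul_const _) (i2.mul_const _),
      integral_mul_const, integral_mul_const, integral_mul_const, integral_mul_const] at hout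
  linarith

/-- Description of the posterior mean. -/
lemma post {Ω : Type*} [MeasurableSpace Ω] (P : Measure Ω) [IsProbabilityMeasure P]
    {N : ℕ} (μ : Ω → ℝ) (B : Fin N → Ω → Bool)
    (hμ : Measurable μ) (hB : ∀ i, Measurable (B i))
    (hrange : ∀ᵐ ω ∂P, μ ω ∈ Set.Icc (0 : ℝ) 1) (hcond : IsBernoulliSample P μ B) :
    ∃ F : (Fin N → Bool) → ℝ,
      (∀ b, F b * ∫ x, lik b x ∂(P.map μ) = ∫ x, x * lik b x ∂(P.map μ)) ∧
      ∀ t : ℝ, P {ω | t ≤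
        (P[μ|MeasurableSpace.comap (fun ω (i : Fin N) => B i ω) inferInstance]) ω} =
        ENNReal.ofReal (∑ b with t ≤ F b, ∫ x, lik b x ∂(P.map μ)) := by
  have hT : Measurable (fun ω (i : Fin N) => B i ω) := measurable_pi_lambda _ hB
  have hprob : IsProbabilityMeasure (P.map μ) := Measure.isProbabilityMeasure_map hμ.aemeasurable
  have hr : ∀ᵐ x ∂(P.map μ), x ∈ Set.Icc (0 : ℝ) 1 :=
    (ae_map_iff hμ.aemeasurable measurableSet_Icc).2 hrange
  have hle : MeasurableSpace.comap (fun ω (i : Fin N) => B i ω) inferInstance ≤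
    (inferInstance : MeasurableSpace Ω) := hT.comap_le
  obtain ⟨F, -, hF⟩ := (stronglyMeasurable_condExp (μ := P) (f := μ)
    (m := MeasurableSpace.comap (fun ω (i : Fin N) => B i ω)
      inferInstance)).measurable.exists_eq_measurable_comp
  have hset : ∀ b : Fin N → Bool, {ω | ∀ i, B i ω = b i} =
      (fun ω (i : Fin N) => B i ω) ⁻¹' {b} := by
    intro b; ext ω; simp [funext_iff]
  have hms : ∀ b : Fin N → Bool, MeasurableSet {ω | ∀ i, B i ω = b i} := by
    intro b; rw [hset]; exact hT (measurableSet_singleton b)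
  have hmap : ∀ b, (P.restrict {ω | ∀ i, B i ω = b i}).map μ =
      (P.map μ).withDensity (fun x => ENNReal.ofReal (lik b x)) := by
    intro b
    ext A hA
    rw [Measure.map_apply hμ hA, Measure.restrict_apply (hμ hA), hcond A hA b,
      withDensity_apply _ hA]
    refine lintegral_congr_ae (ae_restrict_of_ae ?_)
    filter_upwards [hr] with x hx
    rw [lik, ENNReal.ofReal_prod_of_nonneg]
    intro i _
    split_ifs
    · exact hx.1
    · linarith [hx.2]
  have hint : ∀ b : Fin N → Bool, Integrable (lik b) (P.map μ) := fun b => by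
    refine Integrable.of_bound (measurable_lik b).aestronglyMeasurable 1 ?_
    filter_upwards [hr] with x hx
    rw [Real.norm_of_nonneg (lik_nonneg b hx)]
    exact lik_le_one b hx
  have hZ : ∀ b, P {ω | ∀ i, B i ω = b i} = ENNReal.ofReal (∫ x, lik b x ∂(P.map μ)) := by
    intro b
    rw [ofReal_integral_eq_lintegral_ofReal (hint b)
      (by filter_upwards [hr] with x hx using lik_nonneg b hx)]
    have := congrArg (fun m => m Set.univ) (hmap b)
    simpa [Measure.map_apply hμ MeasurableSet.univ, withDensity_apply] using this
  have hZ0 : ∀ b : Fin N → Bool, 0 ≤ ∫ x, lik b x ∂(P.map μ) := fun b =>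
    integral_nonneg_of_ae (by filter_upwards [hr] with x hx using lik_nonneg b hx)
  have hμint : Integrable μ P := by
    refine Integrable.of_bound hμ.aestronglyMeasurable 1 ?_
    filter_upwards [hrange] with x hx
    rw [Real.norm_of_nonneg hx.1]
    exact hx.2
  refine ⟨F, ?_, ?_⟩
  · intro b
    have h1 := setIntegral_condExp hle hμint
      (s := {ω | ∀ i, B i ω = b i}) (by rw [hset]; exact ⟨{b}, measurableSet_singleton b, rfl⟩)
    rw [hF] at h1
    have h2 : ∫ ω in {ω | ∀ i, B i ω = b i}, (F ∘ fun ω (i : Fin N) => B i ω) ω ∂P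
        = ∫ ω in {ω | ∀ i, B i ω = b i}, F b ∂P := by
      refine setIntegral_congr_fun (hms b) ?_
      intro ω hω
      have : (fun i => B i ω) = b := funext hω
      simp [this]
    rw [h2, setIntegral_const, Measure.real, hZ b, ENNReal.toReal_ofReal (hZ0 b), smul_eq_mul,
      mul_comm] at h1
    rw [h1]
    have h3 : ∫ ω in {ω | ∀ i, B i ω = b i}, μ ω ∂P =
        ∫ x, x ∂((P.restrict {ω | ∀ i, B i ω = b i}).map μ) := by
      exact (integral_map (f := fun x : ℝ => x) hμ.aemeasurable aestronglyMeasurable_id).symm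
    rw [h3, hmap, integral_withDensity_eq_integral_toReal_smul
      (measurable_lik b).ennreal_ofReal (by simp)]
    refine integral_congr_ae ?_
    filter_upwards [hr] with x hx
    rw [ENNReal.toReal_ofReal (lik_nonneg b hx), smul_eq_mul, mul_comm]
  · intro t
    rw [hF, ENNReal.ofReal_sum_of_nonneg (fun b _ => hZ0 b)]
    simp_rw [← hZ]
    rw [← measure_biUnion_finset]
    · congr 1
      ext ω
      simp only [Function.comp, Set.mem_setOf_eq, Finset.mem_filter, Finset.mem_univ, true_and,
        Set.mem_iUnion, exists_prop]
      constructor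
      · intro h
        exact ⟨_, h, fun i => rfl⟩
      · rintro ⟨b, hb, h⟩
        have : (fun i => B i ω) = b := funext h
        rwa [this]
    · intro b _ c _ hbc
      refine Set.disjoint_left.2 fun ω h1 h2 => hbc ?_
      funext i
      rw [← h1 i, ← h2 i]
    · intro b _
      exact hms b

/-- **MLR domination of priors yields stochastic domination of posterior means
(Lemma B.10).** Let `μ ~ P₀` and `μ' ~ P₀'` be priors on `[0,1]` with `P₀ = g·P₀'` for a
nondecreasing `g` (MLR domination), let `B_1, …, B_N` (resp. `B'_1, …, B'_N`) be
conditionally i.i.d. Bernoulli samples, and let `M, M'` be the respective posterior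
means. Then `Pr[M' ≥ t] ≤ Pr[M ≥ t]` for every `t`. -/
theorem stmt18 {Ω : Type*} [MeasurableSpace Ω] (P : Measure Ω) [IsProbabilityMeasure P]
    {Ω' : Type*} [MeasurableSpace Ω'] (P' : Measure Ω') [IsProbabilityMeasure P']
    {N : ℕ} (μ : Ω → ℝ) (B : Fin N → Ω → Bool) (μ' : Ω' → ℝ) (B' : Fin N → Ω' → Bool)
    (hμ : Measurable μ) (hB : ∀ i, Measurable (B i))
    (hμ' : Measurable μ') (hB' : ∀ i, Measurable (B' i))
    (hrange : ∀ᵐ ω ∂P, μ ω ∈ Set.Icc (0 : ℝ) 1)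
    (hrange' : ∀ᵐ ω ∂P', μ' ω ∈ Set.Icc (0 : ℝ) 1)
    (g : ℝ → ℝ≥0∞) (hg : Monotone g)
    (hMLR : Measure.map μ P = (Measure.map μ' P').withDensity g)
    (hcond : IsBernoulliSample P μ B) (hcond' : IsBernoulliSample P' μ' B')
    (t : ℝ) :
    P' {ω | t ≤ (P'[μ'|MeasurableSpace.comap (fun ω (i : Fin N) => B' i ω) inferInstance]) ω}
      ≤ P {ω | t ≤
        (P[μ|MeasurableSpace.comap (fun ω (i : Fin N) => B i ω) inferInstance]) ω} := by
  obtain ⟨F, hF, hFt⟩ := post P μ B hμ hB hrange hcond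
  obtain ⟨F', hF', hFt'⟩ := post P' μ' B' hμ' hB' hrange' hcond'
  rw [hFt, hFt']
  have hp : IsProbabilityMeasure (P.map μ) := Measure.isProbabilityMeasure_map hμ.aemeasurable
  have hp' : IsProbabilityMeasure (P'.map μ') := Measure.isProbabilityMeasure_map hμ'.aemeasurable
  have hr' : ∀ᵐ x ∂(P'.map μ'), x ∈ Set.Icc (0 : ℝ) 1 :=
    (ae_map_iff hμ'.aemeasurable measurableSet_Icc).2 hrange'
  rw [hMLR] at hp
  rw [hMLR] at hF ⊢
  generalize P'.map μ' = m at *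
  have hgm : Measurable g := hg.measurable
  have hg1 : ∫⁻ x, g x ∂m = 1 := by
    have := hp.measure_univ
    rwa [withDensity_apply _ MeasurableSet.univ, Measure.restrict_univ] at this
  have hgt : ∀ᵐ x ∂m, g x < ⊤ := ae_lt_top hgm (by simp [hg1])
  have hconv : ∀ h : ℝ → ℝ, ∫ x, h x ∂(m.withDensity g) = ∫ x, h x * (g x).toReal ∂m := by
    intro h
    rw [integral_withDensity_eq_integral_toReal_smul hgm hgt]
    simp [mul_comm]
  have hgi : Integrable (fun x => (g x).toReal) m :=
    integrable_toReal_of_lintegral_ne_top hgm.aemeasurable (by simp [hg1])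
  have hgint : ∫ x, (g x).toReal ∂m = 1 := by
    rw [integral_toReal hgm.aemeasurable hgt, hg1]; simp
  simp only [hconv] at hF ⊢
  -- the good set
  have hS : ∀ᵐ x ∂m, x ∈ {x | x ∈ Set.Icc (0 : ℝ) 1 ∧ g x < ⊤} := by
    filter_upwards [hr', hgt] with x h1 h2 using ⟨h1, h2⟩
  have hgS : ∀ x ∈ {x | x ∈ Set.Icc (0 : ℝ) 1 ∧ g x < ⊤}, ∀ y, y ≤ x →
      (g y).toReal ≤ (g x).toReal := fun x hx y hyx =>
    ENNReal.toReal_mono hx.2.ne (hg hyx)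
  have hbd : ∀ b : Fin N → Bool, ∀ᵐ x ∂m, ‖lik b x‖ ≤ 1 := fun b => by
    filter_upwards [hr'] with x hx
    rw [Real.norm_of_nonneg (lik_nonneg b hx)]
    exact lik_le_one b hx
  have hbx : ∀ᵐ x ∂m, ‖x‖ ≤ 1 := by
    filter_upwards [hr'] with x hx
    rw [Real.norm_of_nonneg hx.1]
    exact hx.2
  have il : ∀ b : Fin N → Bool, Integrable (lik b) m := fun b =>
    Integrable.of_bound (measurable_lik b).aestronglyMeasurable 1 (hbd b)
  have ilg : ∀ b : Fin N → Bool, Integrable (fun x => lik b x * (g x).toReal) m := fun b =>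
    hgi.bdd_mul (measurable_lik b).aestronglyMeasurable (hbd b)
  have ixl : ∀ b : Fin N → Bool, Integrable (fun x => x * lik b x) m := fun b =>
    (il b).bdd_mul aestronglyMeasurable_id hbx
  have ixlg : ∀ b : Fin N → Bool, Integrable (fun x => x * (lik b x * (g x).toReal)) m :=
    fun b => (ilg b).bdd_mul aestronglyMeasurable_id hbx
  have hZ0' : ∀ b : Fin N → Bool, 0 ≤ ∫ x, lik b x ∂m := fun b =>
    integral_nonneg_of_ae (by filter_upwards [hr'] with x hx using lik_nonneg b hx)
  have hZ0 : ∀ b : Fin N → Bool, 0 ≤ ∫ x, lik b x * (g x).toReal ∂m := fun b =>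
    integral_nonneg_of_ae (by
      filter_upwards [hr'] with x hx using mul_nonneg (lik_nonneg b hx) ENNReal.toReal_nonneg)
  refine ENNReal.ofReal_le_ofReal ?_
  -- comparison of posterior means
  have hmean : ∀ b c : Fin N → Bool, cnt c ≤ cnt b → 0 < ∫ x, lik b x * (g x).toReal ∂m →
      0 < ∫ x, lik c x ∂m → F' c ≤ F b := by
    intro b c hcb h1 h2
    have key := cheb m (fun x => x) (fun x => lik b x * (g x).toReal) (lik c) _ hS ?_
      (ilg b) (il c) (ixlg b) (ixl c)
    · rw [← hF' c] at key
      have h3 := hF b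
      simp only [mul_assoc] at h3
      rw [← h3] at key
      have h4 := mul_pos h1 h2
      refine le_of_mul_le_mul_right ?_ h4
      calc _ = _ := by ring
        _ ≤ _ := key
        _ = _ := by ring
    · intro x hx y hy hyx
      refine mul_nonneg (by linarith) ?_
      have h5 := lik_mlr b c hcb hx.1 hy.1 hyx
      have h6 := hgS x hx y hyx
      have h7 := mul_le_mul h5 h6 ENNReal.toReal_nonneg
        (mul_nonneg (lik_nonneg b hx.1) (lik_nonneg c hy.1))
      linarith
  -- comparison of counts
  have hcount : ∀ k : ℕ, ∑ b : Fin N → Bool with k ≤ cnt b, ∫ x, lik b x ∂m ≤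
      ∑ b : Fin N → Bool with k ≤ cnt b, ∫ x, lik b x * (g x).toReal ∂m := by
    intro k
    rw [← integral_finsetSum _ (fun b _ => il b), ← integral_finsetSum _ (fun b _ => ilg b)]
    simp_rw [← Finset.sum_mul]
    have key := cheb m (fun x => ∑ b : Fin N → Bool with k ≤ cnt b, lik b x)
      (fun x => (g x).toReal) (fun _ => 1) _ hS ?_ hgi (integrable_const _) ?_ ?_
    · simpa [hgint] using key
    · intro x hx y hy hyx
      refine mul_nonneg (sub_nonneg.2 (upper_mono k hx.1 hy.1 hyx)) ?_
      have h6 := hgS x hx y hyx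
      linarith
    · simp_rw [Finset.sum_mul]
      exact integrable_finsetSum _ (fun b _ => ilg b)
    · simp_rw [mul_one]
      exact integrable_finsetSum _ (fun b _ => il b)
  by_cases hne : (Finset.univ.filter
      (fun b : Fin N → Bool => t ≤ F' b ∧ 0 < ∫ x, lik b x ∂m)).Nonempty
  · obtain ⟨c, hc, hmin⟩ := Finset.exists_min_image _ cnt hne
    simp only [Finset.mem_filter, Finset.mem_univ, true_and] at hc hmin
    refine le_trans ?_ ((hcount (cnt c)).trans ?_)
    · rw [Finset.sum_filter, Finset.sum_filter]
      refine Finset.sum_le_sum fun b _ => ?_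
      split_ifs with h1 h2 h2
      · exact le_rfl
      · by_contra h3
        exact h2 (hmin b ⟨h1, not_le.1 h3⟩)
      · exact hZ0' b
      · exact le_rfl
    · rw [Finset.sum_filter, Finset.sum_filter]
      refine Finset.sum_le_sum fun b _ => ?_
      split_ifs with h1 h2 h2
      · exact le_rfl
      · by_contra h3
        exact h2 (hc.1.trans (hmean b c h1 (not_le.1 h3) hc.2))
      · exact hZ0 b
      · exact le_rfl
  · refine le_trans (Finset.sum_nonpos fun b hb => ?_) (Finset.sum_nonneg fun b _ => hZ0 b)
    by_contra h3
    simp only [Finset.mem_filter, Finset.mem_univ, true_and] at hb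
    exact hne ⟨b, by simpa using ⟨hb, not_le.1 h3⟩⟩
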